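/- Let L be a commutative ring, f, g ∈ L, let (φ, ψ) be a matrix factorization of f of size n and (φ', ψ') a matrix factorization of g of size m over L. Define the 2nm × 2nm block matrices E = [[φ ⊗ 1ₘ, 1ₙ ⊗ φ'], [−(1ₙ ⊗ ψ'), ψ ⊗ 1ₘ]] and F = [[ψ ⊗ 1ₘ, −(1ₙ ⊗ φ')], [1ₙ ⊗ ψ', φ ⊗ 1ₘ]]. Then E·F = (f + g)·I and F·E = (f + g)·I; that is, the Yoshino tensor product (E, F) is a matrix factorization of f + g of size 2nm. -/

import Mathlib

open Matrix Kronecker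

/-- The Yoshino tensor product of a matrix factorization of `f` and a matrix
factorization of `g` is a matrix factorization of `f + g`. -/
theorem yoshino_tensor_product_is_matrix_factorization
    {L : Type*} [CommRing L] (f g : L) (n m : ℕ)
    (φ ψ : Matrix (Fin n) (Fin n) L) (φ' ψ' : Matrix (Fin m) (Fin m) L)
    (hφψ : φ * ψ = f • (1 : Matrix (Fin n) (Fin n) L))
    (hψφ : ψ * φ = f • (1 : Matrix (Fin n) (Fin n) L))
    (hφψ' : φ' * ψ' = g • (1 : Matrix (Fin m) (Fin m) L))
    (hψφ' : ψ' * φ' = g • (1 : Matrix (Fin m) (Fin m) L)) :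
    Matrix.fromBlocks (φ ⊗ₖ (1 : Matrix (Fin m) (Fin m) L))
        ((1 : Matrix (Fin n) (Fin n) L) ⊗ₖ φ')
        (-((1 : Matrix (Fin n) (Fin n) L) ⊗ₖ ψ'))
        (ψ ⊗ₖ (1 : Matrix (Fin m) (Fin m) L)) *
      Matrix.fromBlocks (ψ ⊗ₖ (1 : Matrix (Fin m) (Fin m) L))
        (-((1 : Matrix (Fin n) (Fin n) L) ⊗ₖ φ'))
        ((1 : Matrix (Fin n) (Fin n) L) ⊗ₖ ψ')
        (φ ⊗ₖ (1 : Matrix (Fin m) (Fin m) L)) =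
      (f + g) • 1 ∧
    Matrix.fromBlocks (ψ ⊗ₖ (1 : Matrix (Fin m) (Fin m) L))
        (-((1 : Matrix (Fin n) (Fin n) L) ⊗ₖ φ'))
        ((1 : Matrix (Fin n) (Fin n) L) ⊗ₖ ψ')
        (φ ⊗ₖ (1 : Matrix (Fin m) (Fin m) L)) *
      Matrix.fromBlocks (φ ⊗ₖ (1 : Matrix (Fin m) (Fin m) L))
        ((1 : Matrix (Fin n) (Fin n) L) ⊗ₖ φ')
        (-((1 : Matrix (Fin n) (Fin n) L) ⊗ₖ ψ'))
        (ψ ⊗ₖ (1 : Matrix (Fin m) (Fin m) L)) =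
      (f + g) • 1 := by
  constructor <;>
    rw [Matrix.fromBlocks_multiply, ← Matrix.fromBlocks_one, Matrix.fromBlocks_smul] <;>
    simp only [Matrix.mul_neg, Matrix.neg_mul, neg_neg, ← Matrix.mul_kronecker_mul,
      Matrix.one_mul, Matrix.mul_one, hφψ, hψφ, hφψ', hψφ', Matrix.smul_kronecker,
      Matrix.kronecker_smul, Matrix.one_kronecker_one, add_neg_cancel,
      smul_zero, add_smul, add_comm]
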